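/- Convergence at strongly normal pointsystems: if f satisfies the regularity condition with V_r < ∞ for some r ≥ 1 and the nodes form a strongly normal pointsystem with constant c > 0 (v_k(t) ≥ c for all k, t), then for n ≥ r+1, ‖f - L_n[f]‖_∞ ≤ π^r V_r / (√c · (n-1)(n-2)···(n-r)). -/

import Mathlib

open Finset Polynomial MeasureTheory

/-- The `k`-th Lagrange basis polynomial for nodes `x : Fin n → ℝ`. -/
noncomputable def lagBasis {n : ℕ} (x : Fin n → ℝ) (k : Fin n) (t : ℝ) : ℝ :=
  ∏ j ∈ Finset.univ.erase k, (t - x j) / (x k - x j)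

/-- The Lagrange interpolant `L_n[f]`. -/
noncomputable def lagInterp {n : ℕ} (x : Fin n → ℝ) (f : ℝ → ℝ) (t : ℝ) : ℝ :=
  ∑ k, f (x k) * lagBasis x k t

/-- The node polynomial `ω(t) = ∏ (t - x_j)`. -/
noncomputable def omegaPoly {n : ℕ} (x : Fin n → ℝ) : Polynomial ℝ :=
  ∏ j, (Polynomial.X - Polynomial.C (x j))

/-- Fejér's function `v_k(t) = 1 - (t - x_k) ω''(x_k)/ω'(x_k)`. -/
noncomputable def fejerV {n : ℕ} (x : Fin n → ℝ) (k : Fin n) (t : ℝ) : ℝ :=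
  1 - (t - x k) *
    ((omegaPoly x).derivative.derivative.eval (x k) / (omegaPoly x).derivative.eval (x k))

/-!
For nodes `v i` in `[-1, 1]` the interpolation error at `t` is `∫ K_m f^{(m+1)}`, where the Peano
kernel `K_0` is the error made at `t` in interpolating the steps `z ↦ 1_{z < y}`, up to sign, and
`K_{m+1} y` is the tail `∫ K_m` over `[y, 1]`. Three facts bound it.

* `±K_0` is the sum of the Lagrange basis values `ℓ_i(t)` over the nodes separated from `t` by a
  point. By the Aitken-Neville recursion, removing the node nearest to `t` reverses the sign of such
  a sum, so `|K_0| ≤ max |ℓ_i(t)|`.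
* `K_m` is orthogonal to the polynomials of degree less than `#s - 1 - m`, so by duality (the
  Bohr-Favard inequality with algebraic polynomials in place of trigonometric ones) its tails are at
  most `π / (#s + 1 - m)` times its maximum. The extremal kernel is the sign of a Chebyshev
  polynomial of the second kind.
* The Hermite-Fejér interpolant of the constant `1` is `1`, that is `∑ v_k ℓ_k² = 1`, so strong
  normality gives `|ℓ_k| ≤ 1 / √c`.
-/

/-- The tail `z ↦ ∫ y in z..b, K y` of a kernel `K` at the right endpoint `b`. Integration by parts
replaces `K` by its tail, so that the iterated Peano kernels are iterated tails. -/
noncomputable def tailIntegral (b : ℝ) (K : ℝ → ℝ) (z : ℝ) : ℝ :=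
  ∫ y in z..b, K y

section TailIntegral

variable {K : ℝ → ℝ} {a b : ℝ}

theorem tailIntegral_self (b : ℝ) (K : ℝ → ℝ) : tailIntegral b K b = 0 :=
  intervalIntegral.integral_same

theorem tailIntegral_sub_tailIntegral (hK : IntervalIntegrable K volume a b) {u v : ℝ}
    (hu : u ∈ Set.uIcc a b) (hv : v ∈ Set.uIcc a b) :
    tailIntegral b K u - tailIntegral b K v = ∫ y in u..v, K y :=
  sub_eq_of_eq_add (intervalIntegral.integral_add_adjacent_intervals
    (hK.mono_set (Set.uIcc_subset_uIcc hu hv))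
    (hK.mono_set (Set.uIcc_subset_uIcc hv Set.right_mem_uIcc))).symm

theorem tailIntegral_eq_neg_integral (b : ℝ) (K : ℝ → ℝ) :
    tailIntegral b K = fun z => -∫ y in b..z, K y :=
  funext fun z => intervalIntegral.integral_symm b z

theorem absolutelyContinuousOnInterval_tailIntegral (hK : IntervalIntegrable K volume a b) :
    AbsolutelyContinuousOnInterval (tailIntegral b K) a b := by
  rw [tailIntegral_eq_neg_integral]
  exact (hK.absolutelyContinuousOnInterval_intervalIntegral Set.right_mem_uIcc).fun_neg

theorem ae_hasDerivAt_tailIntegral (hK : IntervalIntegrable K volume a b) :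
    ∀ᵐ z, z ∈ Set.uIcc a b → HasDerivAt (tailIntegral b K) (-K z) z := by
  rw [tailIntegral_eq_neg_integral]
  filter_upwards [hK.ae_hasDerivAt_integral] with z hz hzab
  exact (hz hzab b Set.right_mem_uIcc).fun_neg

theorem integral_mul_eq_integral_tailIntegral_mul {H h : ℝ → ℝ}
    (hK : IntervalIntegrable K volume a b) (hh : IntervalIntegrable h volume a b)
    (hH : ∀ y ∈ Set.uIcc a b, H y = H a + ∫ z in a..y, h z) :
    ∫ y in a..b, K y * H y =
      (∫ y in a..b, K y) * H a + ∫ z in a..b, tailIntegral b K z * h z := by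
  set P : ℝ → ℝ := fun y => ∫ z in a..y, h z
  have hP : AbsolutelyContinuousOnInterval P a b :=
    hh.absolutelyContinuousOnInterval_intervalIntegral Set.left_mem_uIcc
  have hsplit : ∫ y in a..b, K y * H y =
      (∫ y in a..b, K y) * H a + ∫ y in a..b, P y * K y := by
    rw [← intervalIntegral.integral_mul_const,
      ← intervalIntegral.integral_add (hK.mul_const _) (hK.continuousOn_mul hP.continuousOn)]
    refine intervalIntegral.integral_congr fun y hy => ?_
    simp only [hH y hy, P]
    ring
  have hparts := (absolutelyContinuousOnInterval_tailIntegral hK).integral_mul_deriv_eq_deriv_mul hP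
  have hleft : ∫ z in a..b, tailIntegral b K z * deriv P z =
      ∫ z in a..b, tailIntegral b K z * h z := by
    refine intervalIntegral.integral_congr_ae ?_
    filter_upwards [hh.ae_hasDerivAt_integral] with z hz hzab
    rw [(hz (Set.uIoc_subset_uIcc hzab) a Set.left_mem_uIcc).deriv]
  have hright : ∫ y in a..b, deriv (tailIntegral b K) y * P y = -∫ y in a..b, P y * K y := by
    rw [← intervalIntegral.integral_neg]
    refine intervalIntegral.integral_congr_ae ?_
    filter_upwards [ae_hasDerivAt_tailIntegral hK] with y hy hyab
    rw [(hy (Set.uIoc_subset_uIcc hyab)).deriv]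
    ring
  have hPa : P a = 0 := intervalIntegral.integral_same
  rw [hleft, hright, tailIntegral_self, hPa] at hparts
  linarith

theorem exists_integral_indicator_eq_tailIntegral (hab : a ≤ b) {S : Set ℝ} (hS : IsUpperSet S)
    (K : ℝ → ℝ) :
    ∃ u ∈ Set.Icc a b, ∫ y in a..b, S.indicator K y = tailIntegral b K u := by
  by_cases hb : b ∈ S
  · have hbdd : BddBelow (S ∩ Set.Icc a b) := ⟨a, fun y hy => hy.2.1⟩
    have hbS : b ∈ S ∩ Set.Icc a b := ⟨hb, hab, le_rfl⟩
    set u := sInf (S ∩ Set.Icc a b)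
    have hu : u ∈ Set.Icc a b := ⟨le_csInf ⟨b, hbS⟩ fun y hy => hy.2.1, csInf_le hbdd hbS⟩
    refine ⟨u, hu, ?_⟩
    have hae : ∀ᵐ y : ℝ, y ∈ Set.uIoc a b → S.indicator K y = (Set.Ioi u).indicator K y := by
      filter_upwards [Measure.ae_ne volume u] with y hyu hy
      rw [Set.uIoc_of_le hab] at hy
      rcases hyu.lt_or_gt with hlt | hgt
      · have hyS : y ∉ S := fun h => (csInf_le hbdd ⟨h, hy.1.le, hy.2⟩).not_gt hlt
        rw [Set.indicator_of_notMem hyS, Set.indicator_of_notMem (by simpa using hlt.le)]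
      · obtain ⟨z, hz, hzy⟩ := exists_lt_of_csInf_lt ⟨b, hbS⟩ hgt
        rw [Set.indicator_of_mem (hS hzy.le hz.1), Set.indicator_of_mem (Set.mem_Ioi.mpr hgt)]
    rw [intervalIntegral.integral_congr_ae hae, tailIntegral, intervalIntegral.integral_of_le hab,
      intervalIntegral.integral_of_le hu.2, setIntegral_indicator measurableSet_Ioi,
      Set.Ioc_inter_Ioi, sup_of_le_right hu.1]
  · refine ⟨b, Set.right_mem_Icc.mpr hab, ?_⟩
    rw [tailIntegral_self]
    refine intervalIntegral.integral_zero_ae (Filter.Eventually.of_forall fun y hy => ?_)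
    rw [Set.uIoc_of_le hab] at hy
    exact Set.indicator_of_notMem (fun h => hb (hS hy.2 h)) K

theorem intervalIntegrable_mul_of_monotone (hK : IntervalIntegrable K volume a b) {p : ℝ → ℝ}
    (hp : Monotone p) : IntervalIntegrable (fun y => K y * p y) volume a b := by
  rw [intervalIntegrable_iff] at hK ⊢
  refine hK.mul_bdd (c := max |p (min a b)| |p (max a b)|) hp.measurable.aestronglyMeasurable ?_
  filter_upwards [ae_restrict_mem measurableSet_uIoc] with y hy
  exact abs_le_max_abs_abs (hp hy.1.le) (hp hy.2)

/-- Layer cake: `p y - p a` is the integral over `τ` of the indicator of `τ < p y`, and the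
superlevel sets of `p` are upper sets. -/
theorem abs_integral_mul_le_of_monotone (hab : a ≤ b) (hK : IntervalIntegrable K volume a b)
    (hK0 : ∫ y in a..b, K y = 0) {M : ℝ} (hM : ∀ u ∈ Set.Icc a b, |tailIntegral b K u| ≤ M)
    {p : ℝ → ℝ} (hp : Monotone p) :
    |∫ y in a..b, K y * p y| ≤ M * (p b - p a) := by
  have hpab : p a ≤ p b := hp hab
  let F : ℝ → ℝ → ℝ := fun y τ => {y | τ < p y}.indicator K y
  have hF : IntegrableOn F.uncurry (Set.uIoc a b ×ˢ Set.uIoc (p a) (p b)) := by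
    rw [IntegrableOn, Measure.volume_eq_prod, ← Measure.prod_restrict, Set.uIoc_of_le hpab]
    exact (hK.def'.comp_fst _).indicator
      (measurableSet_lt measurable_snd (hp.measurable.comp measurable_fst))
  have hlayer : ∀ y ∈ Set.uIcc a b, K y * (p y - p a) = ∫ τ in p a..p b, F y τ := by
    intro y hy
    rw [Set.uIcc_of_le hab] at hy
    have hFy : F y = (Set.Iio (p y)).indicator fun _ => K y := by
      ext τ
      simp [F, Set.indicator]
    have hinter : Set.Ioc (p a) (p b) ∩ Set.Iio (p y) = Set.Ioo (p a) (p y) := by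
      ext τ
      simpa [and_assoc] using fun _ h => h.le.trans (hp hy.2)
    rw [hFy, intervalIntegral.integral_of_le hpab, setIntegral_indicator measurableSet_Iio,
      hinter, setIntegral_const, Real.volume_real_Ioo_of_le (hp hy.1), smul_eq_mul, mul_comm]
  have hfubini : ∫ y in a..b, K y * p y = ∫ τ in p a..p b, ∫ y in a..b, F y τ := by
    rw [← intervalIntegral_intervalIntegral_swap hF, ← intervalIntegral.integral_congr hlayer]
    simp_rw [mul_sub]
    rw [intervalIntegral.integral_sub (intervalIntegrable_mul_of_monotone hK hp) (hK.mul_const _),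
      intervalIntegral.integral_mul_const, hK0, zero_mul, sub_zero]
  rw [hfubini, ← Real.norm_eq_abs, ← abs_of_nonneg (sub_nonneg.mpr hpab)]
  refine intervalIntegral.norm_integral_le_of_norm_le_const fun τ _ => ?_
  obtain ⟨u, hu, h⟩ := exists_integral_indicator_eq_tailIntegral hab
    (S := {y | τ < p y}) (fun _ _ hyz hy => hy.trans_le (hp hyz)) K
  rw [h, Real.norm_eq_abs]
  exact hM u hu

theorem exists_monotone_sub_monotone_eqOn (hab : a ≤ b) {g : ℝ → ℝ}
    (hg : BoundedVariationOn g (Set.Icc a b)) :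
    ∃ p q : ℝ → ℝ, Monotone p ∧ Monotone q ∧ Set.EqOn g (p - q) (Set.Icc a b) ∧
      (p b - p a) + (q b - q a) = (eVariationOn g (Set.Icc a b)).toReal := by
  have ha : a ∈ Set.Icc a b := Set.left_mem_Icc.mpr hab
  have hb : b ∈ Set.Icc a b := Set.right_mem_Icc.mpr hab
  have extend : ∀ p : ℝ → ℝ, MonotoneOn p (Set.Icc a b) →
      ∃ p' : ℝ → ℝ, Monotone p' ∧ Set.EqOn p p' (Set.Icc a b) := fun p hp =>
    hp.exists_monotone_extension (hp.map_bddBelow subset_rfl ⟨a, (isLeast_Icc hab).2, ha⟩)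
      (hp.map_bddAbove subset_rfl ⟨b, (isGreatest_Icc hab).2, hb⟩)
  obtain ⟨p, q, hp, hq, hgpq, hvar⟩ :=
    hg.locallyBoundedVariationOn.exists_monotoneOn_sub_monotoneOn'
  obtain ⟨p', hp', hpp'⟩ := extend p hp
  obtain ⟨q', hq', hqq'⟩ := extend q hq
  refine ⟨p', q', hp', hq', fun y hy => ?_, ?_⟩
  · simp only [hgpq, Pi.sub_apply, hpp' hy, hqq' hy]
  · rw [← hpp' ha, ← hpp' hb, ← hqq' ha, ← hqq' hb, hvar a ha b hb,
      variationOnFromTo.eq_of_le _ _ hab, Set.inter_self]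

theorem abs_integral_mul_le_eVariationOn (hab : a ≤ b) (hK : IntervalIntegrable K volume a b)
    (hK0 : ∫ y in a..b, K y = 0) {M : ℝ} (hM : ∀ u ∈ Set.Icc a b, |tailIntegral b K u| ≤ M)
    {g : ℝ → ℝ} (hg : BoundedVariationOn g (Set.Icc a b)) :
    |∫ y in a..b, K y * g y| ≤ M * (eVariationOn g (Set.Icc a b)).toReal := by
  obtain ⟨p, q, hp, hq, hgpq, hvar⟩ := exists_monotone_sub_monotone_eqOn hab hg
  have hsplit : ∫ y in a..b, K y * g y = (∫ y in a..b, K y * p y) - ∫ y in a..b, K y * q y := by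
    rw [← intervalIntegral.integral_sub (intervalIntegrable_mul_of_monotone hK hp)
      (intervalIntegrable_mul_of_monotone hK hq)]
    refine intervalIntegral.integral_congr fun y hy => ?_
    rw [Set.uIcc_of_le hab] at hy
    simp only [hgpq hy, Pi.sub_apply, mul_sub]
  rw [hsplit, ← hvar, mul_add]
  exact (abs_sub _ _).trans (add_le_add (abs_integral_mul_le_of_monotone hab hK hK0 hM hp)
    (abs_integral_mul_le_of_monotone hab hK hK0 hM hq))

end TailIntegral

section Orthogonality

theorem exists_derivative_eq_of_degree_lt {k : Type*} [Field k] [CharZero k] {q : k[X]} {d : ℕ}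
    (hq : q.degree < d) : ∃ Q : k[X], derivative Q = q ∧ Q.degree < (d + 1 : ℕ) := by
  refine ⟨∑ i ∈ range d, monomial (i + 1) (q.coeff i / (i + 1)), ?_, ?_⟩
  · ext i
    have hcoeff : ∀ j : ℕ, q.coeff j / ((j : k) + 1) * ((j + 1 : ℕ) : k) = q.coeff j := fun j => by
      push_cast
      exact div_mul_cancel₀ _ (Nat.cast_add_one_ne_zero j)
    simp only [derivative_sum, derivative_monomial, finsetSum_coeff, coeff_monomial, hcoeff,
      Nat.add_sub_cancel, sum_ite_eq', mem_range]
    split_ifs with hi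
    · rfl
    · exact (coeff_eq_zero_of_degree_lt (hq.trans_le (by exact_mod_cast not_lt.mp hi))).symm
  · refine mem_degreeLT.mp (Submodule.sum_mem _ fun i hi => mem_degreeLT.mpr ?_)
    exact (degree_monomial_le _ _).trans_lt
      (by exact_mod_cast Nat.succ_lt_succ (mem_range.mp hi))

theorem eval_eq_add_integral_derivative (Q : ℝ[X]) (a y : ℝ) :
    Q.eval y = Q.eval a + ∫ z in a..y, (derivative Q).eval z := by
  rw [intervalIntegral.integral_eq_sub_of_hasDerivAt (fun z _ => Q.hasDerivAt z)
    ((derivative Q).continuous.intervalIntegrable _ _), add_sub_cancel]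

/-- The kernel `K` is orthogonal in `L²[a, b]` to every polynomial of degree less than `d`. -/
def OrthogonalToDegreeLT (a b : ℝ) (d : ℕ) (K : ℝ → ℝ) : Prop :=
  ∀ q : ℝ[X], q.degree < d → ∫ y in a..b, K y * q.eval y = 0

variable {K : ℝ → ℝ} {a b : ℝ} {d : ℕ}

theorem OrthogonalToDegreeLT.integral_eq_zero (hK : OrthogonalToDegreeLT a b d K) (hd : 0 < d) :
    ∫ y in a..b, K y = 0 := by
  simpa using hK 1 (by simpa using hd)

theorem OrthogonalToDegreeLT.tailIntegral (hK : OrthogonalToDegreeLT a b (d + 1) K)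
    (hint : IntervalIntegrable K volume a b) :
    OrthogonalToDegreeLT a b d (tailIntegral b K) := by
  intro q hq
  obtain ⟨Q, rfl, hQ⟩ := exists_derivative_eq_of_degree_lt hq
  have hparts := integral_mul_eq_integral_tailIntegral_mul hint
    ((derivative Q).continuous.intervalIntegrable a b)
    fun y _ => eval_eq_add_integral_derivative Q a y
  rw [hK Q hQ, hK.integral_eq_zero d.succ_pos, zero_mul, zero_add] at hparts
  exact hparts.symm

end Orthogonality

section StepInterpolation

variable {𝕜 ι : Type*} [Field 𝕜] [DecidableEq ι] {s : Finset ι} {v : ι → 𝕜} {t : 𝕜}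

theorem eval_basisDivisor (a b t : 𝕜) : (Lagrange.basisDivisor a b).eval t = (t - b) / (a - b) := by
  simp [Lagrange.basisDivisor, div_eq_inv_mul]

theorem eval_interpolate_ite (P : ι → Prop) [DecidablePred P] :
    (Lagrange.interpolate s v fun i => if P i then 1 else 0).eval t =
      ∑ i ∈ s with P i, (Lagrange.basis s v i).eval t := by
  rw [Lagrange.interpolate_apply, eval_finsetSum, sum_filter]
  exact sum_congr rfl fun i _ => by split_ifs <;> simp

theorem sum_eval_basis_node (hv : Set.InjOn v s) (P : ι → Prop) [DecidablePred P] {j : ι}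
    (hj : j ∈ s) :
    ∑ i ∈ s with P i, (Lagrange.basis s v i).eval (v j) = if P j then 1 else 0 := by
  rw [← eval_interpolate_ite, Lagrange.eval_interpolate_at_node _ hv hj]

/-- The recursion of Aitken and Neville, weighted by the nodes where the interpolant vanishes. -/
theorem eval_interpolate_mul_prod_eq_add_erase (hv : Set.InjOn v s) (r : ι → 𝕜) {P : ι → Prop}
    [DecidablePred P] {σ : 𝕜} (hσ : σ ≠ 0) {i j : ι} (hi : i ∈ s) (hj : j ∈ s) (hPi : P i)
    (hPj : ¬ P j) :
    (Lagrange.interpolate s v r).eval t * ∏ b ∈ s with ¬ P b, σ * (t - v b) =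
      (σ * (t - v j)) ^ 2 / (σ * (v i - v j)) *
          ((Lagrange.interpolate (s.erase j) v r).eval t *
            ∏ b ∈ s.erase j with ¬ P b, σ * (t - v b)) +
        -(σ * (t - v i)) / (σ * (v i - v j)) *
          ((Lagrange.interpolate (s.erase i) v r).eval t *
            ∏ b ∈ s.erase i with ¬ P b, σ * (t - v b)) := by
  have hij : i ≠ j := fun h => hPj (h ▸ hPi)
  have hne : v i - v j ≠ 0 := sub_ne_zero.mpr (hv.ne hi hj hij)
  have hprod_i : {b ∈ s.erase i | ¬ P b} = {b ∈ s | ¬ P b} := by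
    rw [filter_erase, erase_eq_of_notMem (by simp [hPi])]
  have hprod_j : ∏ b ∈ s with ¬ P b, σ * (t - v b)
      = σ * (t - v j) * ∏ b ∈ s.erase j with ¬ P b, σ * (t - v b) := by
    rw [filter_erase, mul_prod_erase _ (fun b => σ * (t - v b)) (by simp [hj, hPj])]
  have hweight_j : (t - v j) / (v i - v j) * (σ * (t - v j))
      = (σ * (t - v j)) ^ 2 / (σ * (v i - v j)) := by field_simp
  have hweight_i : (t - v i) / (v j - v i) = -(σ * (t - v i)) / (σ * (v i - v j)) := by
    rw [← neg_sub (v i) (v j), div_neg, neg_div, mul_div_mul_left _ _ hσ]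
  rw [Lagrange.interpolate_eq_add_interpolate_erase _ hv hi hj hij, eval_add, eval_mul, eval_mul,
    eval_basisDivisor, eval_basisDivisor, hweight_i, ← hweight_j, hprod_i, hprod_j]
  ring

variable [LinearOrder 𝕜] [IsStrictOrderedRing 𝕜]

/-- Induction on the number of nodes: in the recursion of Aitken and Neville, erasing one node on
either side of the step, both weights are nonnegative. The sign `σ = ±1` says on which side of the
step the nodes with value `1` lie. -/
theorem eval_interpolate_ite_mul_prod_nonneg (hv : Set.InjOn v s) (P : ι → Prop)
    [DecidablePred P] (σ : 𝕜) (hsep : ∀ i ∈ s, ∀ j ∈ s, P i → ¬ P j → 0 < σ * (v i - v j))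
    (ht : ∀ i ∈ s, P i → σ * (t - v i) ≤ 0) :
    0 ≤ (Lagrange.interpolate s v fun i => if P i then 1 else 0).eval t *
      ∏ j ∈ s with ¬ P j, σ * (t - v j) := by
  induction s using Finset.strongInduction with
  | H s ih =>
    have ih_erase : ∀ a ∈ s, 0 ≤ (Lagrange.interpolate (s.erase a) v
        fun i => if P i then 1 else 0).eval t * ∏ j ∈ s.erase a with ¬ P j, σ * (t - v j) :=
      fun a ha => ih _ (erase_ssubset ha) (hv.mono (by simp))
        (fun i hi j hj => hsep i (mem_of_mem_erase hi) j (mem_of_mem_erase hj))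
        fun i hi => ht i (mem_of_mem_erase hi)
    by_cases hnone : ∀ i ∈ s, ¬ P i
    · rw [eval_interpolate_ite, filter_false_of_mem hnone, sum_empty, zero_mul]
    by_cases hall : ∀ i ∈ s, P i
    · push Not at hnone
      obtain ⟨i, hi, -⟩ := hnone
      rw [eval_interpolate_ite, filter_true_of_mem hall, ← eval_finsetSum,
        Lagrange.sum_basis hv ⟨i, hi⟩, filter_false_of_mem fun j hj => not_not.mpr (hall j hj)]
      simp
    push Not at hnone hall
    obtain ⟨i, hi, hPi⟩ := hnone
    obtain ⟨j, hj, hPj⟩ := hall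
    have hd := hsep i hi j hj hPi hPj
    rw [eval_interpolate_mul_prod_eq_add_erase hv _ (left_ne_zero_of_mul hd.ne') hi hj hPi hPj]
    exact add_nonneg (mul_nonneg (div_nonneg (sq_nonneg _) hd.le) (ih_erase j hj))
      (mul_nonneg (div_nonneg (neg_nonneg.mpr (ht i hi hPi)) hd.le) (ih_erase i hi))

/-- Removing from the sum the node `a` nearest to `t` reverses its sign, so the full sum lies
between `0` and the basis polynomial of `a`. -/
theorem exists_abs_sum_basis_le (hs : s.Nonempty) (hv : Set.InjOn v s) (P : ι → Prop)
    [DecidablePred P] (σ : 𝕜) (hσ : σ ≠ 0)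
    (hsep : ∀ i ∈ s, ∀ j ∈ s, P i → ¬ P j → 0 < σ * (v i - v j))
    (ht : ∀ i ∈ s, P i → σ * (t - v i) ≤ 0) :
    ∃ a ∈ s, |∑ i ∈ s with P i, (Lagrange.basis s v i).eval t| ≤
      |(Lagrange.basis s v a).eval t| := by
  by_cases hnode : ∃ j ∈ s, t = v j
  · obtain ⟨j, hj, rfl⟩ := hnode
    refine ⟨j, hj, ?_⟩
    rw [sum_eval_basis_node hv P hj, Lagrange.eval_basis_self hv hj]
    split_ifs <;> simp
  push Not at hnode
  rcases {i ∈ s | P i}.eq_empty_or_nonempty with hP | hP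
  · obtain ⟨a, ha⟩ := hs
    exact ⟨a, ha, by simp [hP]⟩
  obtain ⟨a, ha, hmin⟩ := exists_min_image _ (fun i => σ * v i) hP
  obtain ⟨has, hPa⟩ := mem_filter.mp ha
  have hp := eval_interpolate_ite_mul_prod_nonneg hv P σ hsep ht
  have hq := eval_interpolate_ite_mul_prod_nonneg hv (fun i => P i ∧ i ≠ a) σ
    (fun i hi j hj hPi hPj => by
      by_cases hj' : P j
      · obtain rfl : j = a := by_contra fun h => hPj ⟨hj', h⟩
        have hle := hmin i (mem_filter.mpr ⟨hi, hPi.1⟩)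
        have hne : σ * (v i - v j) ≠ 0 := mul_ne_zero hσ (sub_ne_zero.mpr (hv.ne hi hj hPi.2))
        exact lt_of_le_of_ne (by linarith) hne.symm
      · exact hsep i hi j hj hPi.1 hj')
    fun i hi hPi => ht i hi hPi.1
  have hfilter : {j ∈ s | ¬ (P j ∧ j ≠ a)} = insert a {j ∈ s | ¬ P j} := by grind
  rw [hfilter, prod_insert (by simp [hPa])] at hq
  rw [eval_interpolate_ite] at hp hq
  rw [← filter_filter, filter_ne'] at hq
  set W := ∏ j ∈ s with ¬ P j, σ * (t - v j)
  have hW : W ≠ 0 := prod_ne_zero_iff.mpr fun j hj =>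
    mul_ne_zero hσ (sub_ne_zero.mpr (hnode j (mem_filter.mp hj).1))
  have hta : σ * (t - v a) < 0 :=
    lt_of_le_of_ne (ht a has hPa) (mul_ne_zero hσ (sub_ne_zero.mpr (hnode a has)))
  refine ⟨a, has, le_of_mul_le_mul_right ?_ (abs_pos.mpr hW)⟩
  rw [← abs_mul, ← abs_mul, abs_of_nonneg hp, ← add_sum_erase _ _ ha, add_mul]
  have hqW : (∑ i ∈ {i ∈ s | P i}.erase a, (Lagrange.basis s v i).eval t) * W ≤ 0 := by
    by_contra! h
    linarith [mul_neg_of_neg_of_pos hta h]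
  linarith [le_abs_self ((Lagrange.basis s v a).eval t * W)]

theorem step_sub_interpolate_mul_nodal_nonneg (hv : Set.InjOn v s) (hs : s.Nonempty) (z y : 𝕜) :
    0 ≤ (-1) ^ #{i ∈ s | z < v i} * (((if z < y then 1 else 0) -
      (Lagrange.interpolate s v fun i => if z < v i then 1 else 0).eval y) *
        ((y - z) * (Lagrange.nodal s v).eval y)) := by
  rw [Lagrange.eval_nodal, ← prod_filter_mul_prod_filter_not s (fun i => z < v i)]
  rcases le_or_gt y z with hyz | hzy
  · have hq := eval_interpolate_ite_mul_prod_nonneg (t := y) hv (fun i => z < v i) 1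
      (fun i _ j _ hi hj => by linarith) fun i _ hi => by linarith
    have habove : 0 ≤ ∏ i ∈ s with z < v i, -(y - v i) :=
      prod_nonneg fun i hi => by linarith [(mem_filter.mp hi).2]
    simp only [one_mul] at hq
    rw [prod_neg] at habove
    rw [if_neg hyz.not_gt]
    linarith [mul_nonneg (sub_nonneg.mpr hyz) (mul_nonneg hq habove)]
  · have hq := eval_interpolate_ite_mul_prod_nonneg (t := y) hv (fun i => ¬ z < v i) (-1)
      (fun i _ j _ hi hj => by linarith [not_not.mp hj]) fun i _ hi => by linarith
    have hbelow : 0 ≤ ∏ i ∈ s with ¬ z < v i, (y - v i) :=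
      prod_nonneg fun i hi => by linarith [(mem_filter.mp hi).2]
    have hcompl : 1 - (Lagrange.interpolate s v fun i => if z < v i then 1 else 0).eval y =
        (Lagrange.interpolate s v fun i => if ¬ z < v i then 1 else 0).eval y := by
      rw [eval_interpolate_ite, eval_interpolate_ite, sub_eq_iff_eq_add',
        sum_filter_add_sum_filter_not, ← eval_finsetSum, Lagrange.sum_basis hv hs, eval_one]
    simp only [neg_one_mul, not_not, prod_neg] at hq
    rw [if_pos hzy, hcompl]
    linarith [mul_nonneg (sub_nonneg.mpr hzy.le) (mul_nonneg hq hbelow)]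

end StepInterpolation

section StepFunction

variable {a b z : ℝ} {h : ℝ → ℝ}

theorem ite_lt_mul_eq_indicator (z : ℝ) (h : ℝ → ℝ) :
    (fun y => (if z < y then 1 else 0) * h y) = (Set.Ioi z).indicator h := by
  ext y
  simp [Set.indicator]

theorem intervalIntegrable_ite_lt_mul (hh : IntervalIntegrable h volume a b) (z : ℝ) :
    IntervalIntegrable (fun y => (if z < y then 1 else 0) * h y) volume a b := by
  rw [ite_lt_mul_eq_indicator]
  rw [intervalIntegrable_iff] at hh ⊢
  exact hh.indicator measurableSet_Ioi

theorem integral_ite_lt_mul (hz : z ∈ Set.Icc a b) (h : ℝ → ℝ) :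
    ∫ y in a..b, (if z < y then 1 else 0) * h y = tailIntegral b h z := by
  rw [ite_lt_mul_eq_indicator, tailIntegral, intervalIntegral.integral_of_le (hz.1.trans hz.2),
    intervalIntegral.integral_of_le hz.2, setIntegral_indicator measurableSet_Ioi,
    Set.Ioc_inter_Ioi, sup_of_le_right hz.1]

end StepFunction

section Extremal

variable {ι : Type*} {s : Finset ι} {v : ι → ℝ}

/-- The sign of the node polynomial `∏ i ∈ s, (y - v i)`. Among the kernels bounded by `1` and
orthogonal to the same polynomials it has the largest tail at every node, as soon as it is
orthogonal to those of degree less than `#s - 1`. -/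
noncomputable def nodalSign (s : Finset ι) (v : ι → ℝ) (y : ℝ) : ℝ :=
  SignType.sign ((Lagrange.nodal s v).eval y)

theorem nodalSign_eq_neg_one_pow {y : ℝ} (hy : ∀ i ∈ s, y ≠ v i) :
    nodalSign s v y = (-1) ^ #{i ∈ s | y < v i} := by
  have hcoe : nodalSign s v y = ∏ i ∈ s, (SignType.sign (y - v i) : ℝ) := by
    rw [nodalSign, Lagrange.eval_nodal]
    exact map_prod (SignType.castHom.comp signHom : ℝ →*₀ ℝ) _ _
  have hsign : ∀ i ∈ s, (SignType.sign (y - v i) : ℝ) = if y < v i then -1 else 1 := by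
    intro i hi
    rcases (hy i hi).lt_or_gt with hlt | hgt
    · rw [sign_neg (sub_neg.mpr hlt), if_pos hlt, SignType.coe_neg_one]
    · rw [sign_pos (sub_pos.mpr hgt), if_neg hgt.not_gt, SignType.coe_one]
  rw [hcoe, prod_congr rfl hsign, prod_ite, prod_const, prod_const_one, mul_one]

theorem monotone_sign_cast : Monotone fun u : ℝ => (SignType.sign u : ℝ) := by
  have hcast : Monotone fun e : SignType => (e : ℝ) := by
    rintro (_ | _ | _) (_ | _ | _) h <;> first | exact absurd h (by decide) | simp
  exact hcast.comp SignType.sign.monotone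

theorem intervalIntegrable_nodalSign (s : Finset ι) (v : ι → ℝ) (a b : ℝ) :
    IntervalIntegrable (nodalSign s v) volume a b := by
  have hle : ∀ e : SignType, |(e : ℝ)| ≤ 1 := fun e => by cases e <;> simp
  refine (intervalIntegrable_const (c := (1 : ℝ))).mono_fun (monotone_sign_cast.measurable.comp
    (Lagrange.nodal s v).continuous.measurable).aestronglyMeasurable
    (Filter.Eventually.of_forall fun y => ?_)
  exact (hle (SignType.sign _)).trans_eq norm_one.symm

theorem ae_eval_nodal_ne_zero (s : Finset ι) (v : ι → ℝ) :
    ∀ᵐ y, (Lagrange.nodal s v).eval y ≠ 0 := by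
  filter_upwards [(finite_setOfPred_isRoot (Lagrange.nodal_ne_zero (s := s) (v := v))).measure_zero
    volume |> compl_mem_ae_iff.mpr] with y hy using hy

theorem abs_step_sub_interpolate_eq [DecidableEq ι] (hv : Set.InjOn v s) (hs : 1 < #s) {i : ι}
    (hi : i ∈ s) {y : ℝ} (hy : (Lagrange.nodal s v).eval y ≠ 0) :
    |(if v i < y then 1 else 0) - (Lagrange.interpolate (s.erase i) v
        fun j => if v i < v j then 1 else 0).eval y| =
      (-1) ^ #{j ∈ s.erase i | v i < v j} * (((if v i < y then 1 else 0) -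
        (Lagrange.interpolate (s.erase i) v fun j => if v i < v j then 1 else 0).eval y) *
          nodalSign s v y) := by
  have hnonneg := step_sub_interpolate_mul_nodal_nonneg (hv.mono (by simp))
    (card_pos.mp (by rw [card_erase_of_mem hi]; omega : 0 < #(s.erase i))) (v i) y
  have hnodal :
      (y - v i) * (Lagrange.nodal (s.erase i) v).eval y = (Lagrange.nodal s v).eval y := by
    rw [Lagrange.nodal_eq_mul_nodal_erase hi]
    simp
  rw [hnodal] at hnonneg
  refine mul_right_cancel₀ (abs_ne_zero.mpr hy) ?_
  rw [mul_assoc, mul_assoc, nodalSign, sign_mul_abs, ← abs_mul, ← abs_of_nonneg hnonneg,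
    abs_mul ((-1) ^ _), abs_neg_one_pow, one_mul]

/-- The step function at the node `v i` minus its interpolant at the other nodes changes sign
exactly where the node polynomial does. -/
theorem abs_tailIntegral_le_mul_abs_tailIntegral_nodalSign {K : ℝ → ℝ} {a b M : ℝ}
    (hv : Set.InjOn v s) (hs : 1 < #s) {i : ι} (hi : i ∈ s) (hvi : v i ∈ Set.Icc a b)
    (hω : OrthogonalToDegreeLT a b (#s - 1) (nodalSign s v))
    (hint : IntervalIntegrable K volume a b) (hK : OrthogonalToDegreeLT a b (#s - 1) K)
    (hM : ∀ y ∈ Set.Icc a b, |K y| ≤ M) :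
    |tailIntegral b K (v i)| ≤ M * |tailIntegral b (nodalSign s v) (v i)| := by
  classical
  set q := Lagrange.interpolate (s.erase i) v fun j => if v i < v j then (1 : ℝ) else 0
  have hq : q.degree < (#s - 1 : ℕ) := by
    rw [← card_erase_of_mem hi]
    exact Lagrange.degree_interpolate_lt _ (hv.mono (by simp))
  have hab : a ≤ b := hvi.1.trans hvi.2
  have htail : ∀ h : ℝ → ℝ, IntervalIntegrable h volume a b → OrthogonalToDegreeLT a b (#s - 1) h →
      ∫ y in a..b, ((if v i < y then 1 else 0) - q.eval y) * h y = tailIntegral b h (v i) := by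
    intro h hh horth
    have hzero : ∫ y in a..b, q.eval y * h y = 0 := by
      simpa only [mul_comm] using horth q hq
    simp_rw [sub_mul]
    rw [intervalIntegral.integral_sub (intervalIntegrable_ite_lt_mul hh _)
      (hh.continuousOn_mul q.continuous.continuousOn), integral_ite_lt_mul hvi, hzero, sub_zero]
  have hωint := intervalIntegrable_nodalSign s v a b
  calc |tailIntegral b K (v i)|
      = ‖∫ y in a..b, ((if v i < y then 1 else 0) - q.eval y) * K y‖ := by
        rw [htail K hint hK, Real.norm_eq_abs]
    _ ≤ ∫ y in a..b, (-1) ^ #{j ∈ s.erase i | v i < v j} *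
          (((if v i < y then 1 else 0) - q.eval y) * nodalSign s v y) * M := by
        refine intervalIntegral.norm_integral_le_of_norm_le hab ?_ ?_
        · filter_upwards [ae_eval_nodal_ne_zero s v] with y hy hyab
          rw [← abs_step_sub_interpolate_eq hv hs hi hy, norm_mul]
          exact mul_le_mul_of_nonneg_left (hM y (Set.Ioc_subset_Icc_self hyab)) (abs_nonneg _)
        · simp_rw [sub_mul]
          exact (((intervalIntegrable_ite_lt_mul hωint _).sub
            (hωint.continuousOn_mul q.continuous.continuousOn)).const_mul _).mul_const _
    _ = (-1) ^ #{j ∈ s.erase i | v i < v j} * tailIntegral b (nodalSign s v) (v i) * M := by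
        rw [intervalIntegral.integral_mul_const, intervalIntegral.integral_const_mul,
          htail _ hωint hω]
    _ ≤ M * |tailIntegral b (nodalSign s v) (v i)| := by
        rw [mul_comm]
        refine mul_le_mul_of_nonneg_left ((le_abs_self _).trans_eq ?_)
          ((abs_nonneg _).trans (hM _ hvi))
        rw [abs_mul, abs_neg_one_pow, one_mul]

end Extremal

section Chebyshev

open Polynomial.Chebyshev Real

theorem cos_half_mul_cos_sub_cos (α : ℝ) (k : ℕ) :
    cos (α / 2) * (cos (k * α) - cos ((k + 1 : ℕ) * α)) =
      sin (α / 2) * (sin (k * α) + sin ((k + 1 : ℕ) * α)) := by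
  have hα : α = 2 * (α / 2) := by ring
  have hcos : cos α = 1 - 2 * sin (α / 2) ^ 2 := by
    rw [hα, cos_two_mul, ← hα, cos_sq']
    ring
  have hcos' : cos α = 2 * cos (α / 2) ^ 2 - 1 := by
    rw [hα, cos_two_mul, ← hα]
  have hsin : sin α = 2 * sin (α / 2) * cos (α / 2) := by
    rw [hα, sin_two_mul, ← hα]
  push_cast
  rw [add_one_mul, cos_add, sin_add]
  linear_combination (sin (k * α) * cos (α / 2) - cos (k * α) * sin (α / 2)) * hsin -
    cos (α / 2) * cos (k * α) * hcos - sin (α / 2) * sin (k * α) * hcos'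

theorem sin_half_mul_sin_add_sin_le {α : ℝ} (hα : 0 ≤ α) (hcos : 0 ≤ cos (α / 2)) (k : ℕ) :
    sin (α / 2) * (sin (k * α) + sin ((k + 1 : ℕ) * α)) ≤ α * cos (α / 2) := by
  have hsum : sin (k * α) + sin ((k + 1 : ℕ) * α) = 2 * sin ((k + 1 / 2) * α) * cos (α / 2) := by
    rw [add_comm, sin_add_sin]
    congr <;> push_cast <;> ring
  have hsin : sin (α / 2) * sin ((k + 1 / 2) * α) ≤ α / 2 := by
    refine (le_abs_self _).trans ?_
    rw [abs_mul, ← mul_one (α / 2)]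
    refine mul_le_mul (abs_sin_le_abs.trans_eq ?_) (abs_sin_le_one _) (abs_nonneg _) (by positivity)
    rw [abs_of_nonneg (by positivity), mul_one]
  rw [hsum]
  linarith [mul_le_mul_of_nonneg_right hsin hcos]

theorem cos_half_mul_sum_neg_one_pow_mul_cos_sub_cos (α : ℝ) (k : ℕ) :
    cos (α / 2) * ∑ j ∈ range k, (-1) ^ j * (cos (j * α) - cos ((j + 1 : ℕ) * α)) =
      (-1) ^ (k + 1) * (sin (α / 2) * sin (k * α)) := by
  induction k with
  | zero => simp
  | succ k ih =>
    rw [sum_range_succ, mul_add, ih, mul_left_comm (cos (α / 2)), cos_half_mul_cos_sub_cos]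
    ring

theorem eval_T_real_node_eq_cos (m k j : ℕ) :
    (T ℝ k).eval (node m j) = cos (j * (k * (π / m))) := by
  rw [node, T_real_cos]
  congr 1
  push_cast
  ring

theorem sum_neg_one_pow_mul_eval_T_node_sub {m k : ℕ} (hk : k < m) :
    ∑ j ∈ range m, (-1) ^ j * ((T ℝ k).eval (node m j) - (T ℝ k).eval (node m (j + 1))) = 0 := by
  have hkm : (k : ℝ) < m := by exact_mod_cast hk
  have hm : (0 : ℝ) < m := k.cast_nonneg.trans_lt hkm
  have hlt : k * (π / m) < π := by
    rw [← mul_div_assoc, div_lt_iff₀ hm, mul_comm]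
    exact mul_lt_mul_of_pos_left hkm pi_pos
  have hcos : cos (k * (π / m) / 2) ≠ 0 := (cos_pos_of_mem_Ioo
    ⟨by linarith [pi_pos, show 0 ≤ k * (π / m) by positivity], by linarith⟩).ne'
  have hsum := cos_half_mul_sum_neg_one_pow_mul_cos_sub_cos (k * (π / m)) m
  rw [mul_left_comm (m : ℝ), mul_div_cancel₀ _ hm.ne', sin_nat_mul_pi, mul_zero, mul_zero] at hsum
  simp_rw [eval_T_real_node_eq_cos]
  exact (mul_eq_zero.mp hsum).resolve_left hcos

theorem sum_neg_one_pow_mul_eval_node_sub {m : ℕ} {Q : ℝ[X]} (hQ : Q.degree < m) :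
    ∑ j ∈ range m, (-1) ^ j * (Q.eval (node m j) - Q.eval (node m (j + 1))) = 0 := by
  have hmem : Q ∈ degreeLT ℝ m := mem_degreeLT.mpr hQ
  rw [← Sequence.span_degreeLT (chebyshevTsequence ℝ) (by simp), ← coe_range,
    Submodule.mem_span_image_finset_iff_exists_fun'] at hmem
  obtain ⟨c, rfl⟩ := hmem
  simp_rw [eval_finsetSum, eval_smul, smul_eq_mul, ← sum_sub_distrib, ← mul_sub, mul_sum,
    mul_left_comm _ (c _)]
  rw [sum_comm]
  refine sum_eq_zero fun k hk => ?_
  rw [← mul_sum, chebyshevTsequence, sum_neg_one_pow_mul_eval_T_node_sub (mem_range.mp hk),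
    mul_zero]

theorem nodalSign_node_eq {m j : ℕ} (hj : j < m) {y : ℝ}
    (hy : y ∈ Set.Ioo (node m (j + 1)) (node m j)) :
    nodalSign (Ioo 0 m) (node m) y = (-1) ^ j := by
  have hlt_iff : ∀ i ∈ Ioo 0 m, y < node m i ↔ i ≤ j := by
    intro i hi
    have him := (mem_Ioo.mp hi).2
    refine ⟨fun h => ?_, fun hij => ?_⟩
    · by_contra! hji
      exact (hy.1.trans h).not_ge ((strictAntiOn_node m).antitoneOn (by simp; omega)
        (by simp; omega) hji)
    · exact hy.2.trans_le ((strictAntiOn_node m).antitoneOn (by simp; omega) (by simp; omega) hij)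
  have hne : ∀ i ∈ Ioo 0 m, y ≠ node m i := by
    rintro i hi rfl
    have hji : ¬ i ≤ j := fun h => lt_irrefl _ ((hlt_iff i hi).mpr h)
    exact hy.1.not_ge ((strictAntiOn_node m).antitoneOn (by simp; omega)
      (by simp at hi ⊢; omega) (not_le.mp hji))
  have hfilter : {i ∈ Ioo 0 m | y < node m i} = Ioc 0 j := by
    rw [filter_congr hlt_iff]
    ext i
    simp only [mem_filter, mem_Ioo, mem_Ioc]
    omega
  rw [nodalSign_eq_neg_one_pow hne, hfilter, Nat.card_Ioc, Nat.sub_zero]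

theorem integral_nodalSign_node_mul_derivative {m k : ℕ} (hk : k ≤ m) (Q : ℝ[X]) :
    ∫ y in node m k..1, nodalSign (Ioo 0 m) (node m) y * (derivative Q).eval y =
      ∑ j ∈ range k, (-1) ^ j * (Q.eval (node m j) - Q.eval (node m (j + 1))) := by
  have hpiece : ∀ j < k, ∫ y in node m j..node m (j + 1),
      nodalSign (Ioo 0 m) (node m) y * (derivative Q).eval y =
        -((-1) ^ j * (Q.eval (node m j) - Q.eval (node m (j + 1)))) := by
    intro j hj
    have hjm : j < m := hj.trans_le hk
    rw [intervalIntegral.integral_symm, intervalIntegral.integral_congr_Ioo_of_le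
      (g := fun y => (-1) ^ j * (derivative Q).eval y)
      (node_lt (by omega) j.lt_succ_self).le fun y hy => by simp only [nodalSign_node_eq hjm hy],
      intervalIntegral.integral_const_mul,
      intervalIntegral.integral_eq_sub_of_hasDerivAt (fun z _ => Q.hasDerivAt z)
        ((derivative Q).continuous.intervalIntegrable _ _)]
  have hint : ∀ u w, IntervalIntegrable
      (fun y => nodalSign (Ioo 0 m) (node m) y * (derivative Q).eval y) volume u w := fun u w =>
    (intervalIntegrable_nodalSign _ _ u w).mul_continuousOn (derivative Q).continuous.continuousOn
  rw [intervalIntegral.integral_symm]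
  nth_rw 1 [← node_eq_one (n := m)]
  rw [← intervalIntegral.sum_integral_adjacent_intervals fun j _ => hint _ _, ← sum_neg_distrib]
  exact sum_congr rfl fun j hj => by rw [hpiece j (mem_range.mp hj), neg_neg]

theorem orthogonalToDegreeLT_nodalSign_node (d : ℕ) :
    OrthogonalToDegreeLT (-1) 1 d (nodalSign (Ioo 0 (d + 1)) (node (d + 1))) := by
  intro q hq
  obtain ⟨Q, rfl, hQ⟩ := exists_derivative_eq_of_degree_lt hq
  rw [← node_eq_neg_one d.succ_ne_zero, integral_nodalSign_node_mul_derivative le_rfl,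
    sum_neg_one_pow_mul_eval_node_sub hQ]

theorem cos_pi_div_half_pos {m : ℕ} (hm : 1 < m) : 0 < cos (π / m / 2) := by
  have hlt : π / m < π := div_lt_self pi_pos (by exact_mod_cast hm)
  have hnonneg : 0 ≤ π / m := by positivity
  exact cos_pos_of_mem_Ioo ⟨by linarith [pi_pos], by linarith⟩

theorem cos_half_mul_abs_tailIntegral_nodalSign_node {m k : ℕ} (hm : 1 < m) (hk : k ≤ m) :
    cos (π / m / 2) * |tailIntegral 1 (nodalSign (Ioo 0 m) (node m)) (node m k)| =
      sin (π / m / 2) * sin (k * (π / m)) := by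
  have hπm : π / m ≤ π := div_le_self pi_pos.le (by exact_mod_cast hm.le)
  have hπm0 : 0 ≤ π / m := by positivity
  have hkπ : k * (π / m) ≤ π := by
    rw [← mul_div_assoc, div_le_iff₀ (by exact_mod_cast one_pos.trans hm), mul_comm]
    exact mul_le_mul_of_nonneg_left (by exact_mod_cast hk) pi_pos.le
  have hsin : 0 ≤ sin (π / m / 2) * sin (k * (π / m)) :=
    mul_nonneg (sin_nonneg_of_mem_Icc ⟨by linarith, by linarith⟩)
      (sin_nonneg_of_mem_Icc ⟨by positivity, hkπ⟩)
  have htail : tailIntegral 1 (nodalSign (Ioo 0 m) (node m)) (node m k) =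
      ∑ j ∈ range k, (-1) ^ j * (cos (j * (π / m)) - cos ((j + 1 : ℕ) * (π / m))) := by
    simpa [tailIntegral, node, mul_div_assoc] using integral_nodalSign_node_mul_derivative hk X
  nth_rw 1 [htail, ← abs_of_pos (cos_pi_div_half_pos hm)]
  rw [← abs_mul, cos_half_mul_sum_neg_one_pow_mul_cos_sub_cos, abs_mul, abs_neg_one_pow, one_mul,
    abs_of_nonneg hsin]

variable {d : ℕ} {K : ℝ → ℝ} {M : ℝ}

theorem cos_half_mul_abs_tailIntegral_node_le (hd : 0 < d)
    (hint : IntervalIntegrable K volume (-1) 1) (hM : ∀ y ∈ Set.Icc (-1) 1, |K y| ≤ M)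
    (hK : OrthogonalToDegreeLT (-1) 1 d K) {k : ℕ} (hk : k ≤ d + 2) :
    cos (π / (d + 2 : ℕ) / 2) * |tailIntegral 1 K (node (d + 2) k)| ≤
      M * (sin (π / (d + 2 : ℕ) / 2) * sin (k * (π / (d + 2 : ℕ)))) := by
  rcases Nat.eq_zero_or_pos k with rfl | hk0
  · simp [node_eq_one, tailIntegral_self]
  rcases hk.eq_or_lt with rfl | hklt
  · have hsin : sin ((d + 2 : ℕ) * (π / (d + 2 : ℕ))) = 0 := by
      rw [mul_div_cancel₀ _ (by positivity), sin_pi]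
    rw [node_eq_neg_one (by omega), tailIntegral, hK.integral_eq_zero hd, hsin]
    simp
  have hinj : Set.InjOn (node (d + 2)) (Ioo 0 (d + 2)) :=
    (strictAntiOn_node (d + 2)).injOn.mono fun i hi => by simp at hi ⊢; omega
  have hcard : #(Ioo 0 (d + 2)) - 1 = d := by simp
  have hext := abs_tailIntegral_le_mul_abs_tailIntegral_nodalSign hinj (by simp; omega)
    (mem_Ioo.mpr ⟨hk0, hklt⟩) node_mem_Icc
    (fun q hq => orthogonalToDegreeLT_nodalSign_node (d + 1) q
      (hq.trans_le (by rw [hcard]; exact_mod_cast d.le_succ)))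
    hint (hcard.symm ▸ hK) hM
  rw [← cos_half_mul_abs_tailIntegral_nodalSign_node (by omega) hk, mul_left_comm]
  exact mul_le_mul_of_nonneg_left hext (cos_pi_div_half_pos (by omega)).le

theorem exists_mem_Icc_node {m : ℕ} (hm : m ≠ 0) {u : ℝ} (hu : u ∈ Set.Icc (-1) 1) :
    ∃ k < m, u ∈ Set.Icc (node m (k + 1)) (node m k) := by
  by_contra! hnot
  have hle : ∀ k < m, u ≤ node m k := by
    intro k
    induction k with
    | zero => exact fun _ => node_eq_one.symm ▸ hu.2
    | succ k ih => exact fun hk => le_of_not_ge fun h => hnot k (by omega) ⟨h, ih (by omega)⟩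
  refine hnot (m - 1) (by omega) ⟨?_, hle _ (by omega)⟩
  rw [Nat.sub_add_cancel (by omega), node_eq_neg_one hm]
  exact hu.1

/-- The tail is `M`-Lipschitz; averaging its bounds at the two neighbouring Chebyshev nodes removes
the dependence on the position of `u` between them. -/
theorem abs_tailIntegral_le_of_orthogonalToDegreeLT (hd : 0 < d)
    (hint : IntervalIntegrable K volume (-1) 1) (hM : ∀ y ∈ Set.Icc (-1) 1, |K y| ≤ M)
    (hK : OrthogonalToDegreeLT (-1) 1 d K) {u : ℝ} (hu : u ∈ Set.Icc (-1) 1) :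
    |tailIntegral 1 K u| ≤ M * (π / (d + 2 : ℕ)) := by
  have hM0 : 0 ≤ M := (abs_nonneg _).trans (hM u hu)
  have hlip : ∀ w ∈ Set.Icc (-1 : ℝ) 1, |tailIntegral 1 K u| - |tailIntegral 1 K w| ≤
      M * |w - u| := by
    intro w hw
    rw [← Set.uIcc_of_le (by norm_num : (-1 : ℝ) ≤ 1)] at hM hu hw
    refine (abs_sub_abs_le_abs_sub _ _).trans ?_
    rw [tailIntegral_sub_tailIntegral hint hu hw, ← Real.norm_eq_abs]
    exact intervalIntegral.norm_integral_le_of_norm_le_const fun y hy =>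
      hM y (Set.uIcc_subset_uIcc hu hw (Set.uIoc_subset_uIcc hy))
  obtain ⟨k, hk, hku⟩ := exists_mem_Icc_node (by omega : d + 2 ≠ 0) hu
  have hright := hlip _ (node_mem_Icc (n := d + 2) (i := k))
  have hleft := hlip _ (node_mem_Icc (n := d + 2) (i := k + 1))
  rw [abs_of_nonneg (sub_nonneg.mpr hku.2)] at hright
  rw [abs_of_nonpos (sub_nonpos.mpr hku.1)] at hleft
  have hnode_right := cos_half_mul_abs_tailIntegral_node_le hd hint hM hK hk.le
  have hnode_left := cos_half_mul_abs_tailIntegral_node_le hd hint hM hK (Nat.succ_le_of_lt hk)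
  have hcos := cos_pi_div_half_pos (by omega : 1 < d + 2)
  have hgap := cos_half_mul_cos_sub_cos (π / (d + 2 : ℕ)) k
  simp only [node, mul_div_assoc] at hright hleft hnode_right hnode_left
  set α : ℝ := π / (d + 2 : ℕ)
  have htrig := sin_half_mul_sin_add_sin_le (by positivity : 0 ≤ α) hcos.le k
  refine le_of_mul_le_mul_left ?_ hcos
  linarith [mul_le_mul_of_nonneg_left (add_le_add hright hleft) hcos.le,
    mul_le_mul_of_nonneg_left htrig hM0, congrArg (M * ·) hgap]

end Chebyshev

section Fejer

variable {F ι : Type*} [Field F] {s : Finset ι} {v : ι → F}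

theorem eq_zero_of_double_roots (hv : Set.InjOn v s) {p : F[X]} (hdeg : p.degree < (2 * #s : ℕ))
    (h0 : ∀ i ∈ s, p.eval (v i) = 0) (h1 : ∀ i ∈ s, p.derivative.eval (v i) = 0) : p = 0 := by
  by_contra hp
  have hdvd : ∏ i ∈ s, (X - C (v i)) ^ 2 ∣ p := by
    refine Finset.prod_dvd_of_coprime (fun i hi j hj hij => ?_) fun i hi => ?_
    · exact (isCoprime_X_sub_C_of_isUnit_sub (sub_ne_zero.mpr (hv.ne hi hj hij)).isUnit).pow
    · rw [← le_rootMultiplicity_iff hp]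
      exact (one_lt_rootMultiplicity_iff_isRoot hp).mpr ⟨h0 i hi, h1 i hi⟩
  refine (degree_le_of_dvd hdvd hp).not_gt (hdeg.trans_eq ?_)
  simp [degree_prod, mul_comm]

variable [DecidableEq ι]

theorem eval_derivative_derivative_nodal {i : ι} (hi : i ∈ s) :
    (Lagrange.nodal s v).derivative.derivative.eval (v i)
      = 2 * (Lagrange.nodal (s.erase i) v).derivative.eval (v i) := by
  rw [Lagrange.nodal_eq_mul_nodal_erase hi]
  simp [derivative_mul, two_mul]

theorem two_mul_eval_derivative_basis_self {i : ι} (hi : i ∈ s) :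
    2 * (Lagrange.basis s v i).derivative.eval (v i)
      = (Lagrange.nodal s v).derivative.derivative.eval (v i)
        / (Lagrange.nodal s v).derivative.eval (v i) := by
  rw [Lagrange.basis_eq_prod_sub_inv_mul_nodal_div hi, ← Lagrange.nodal_erase_eq_nodal_div hi,
    Lagrange.nodalWeight_eq_eval_nodal_erase_inv, eval_derivative_derivative_nodal hi,
    Lagrange.eval_nodal_derivative_eval_node_eq hi, derivative_C_mul, eval_mul, eval_C]
  ring

/-- The Hermite–Fejér fundamental polynomial: among the nodes `v j`, `j ∈ s`, it takes the value `1`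
at `v i` only, and its derivative vanishes at all of them. -/
noncomputable def hermiteFejerBasis (s : Finset ι) (v : ι → F) (i : ι) : F[X] :=
  (1 - (X - C (v i)) * C ((Lagrange.nodal s v).derivative.derivative.eval (v i) /
    (Lagrange.nodal s v).derivative.eval (v i))) * Lagrange.basis s v i ^ 2

theorem degree_hermiteFejerBasis_lt (hv : Set.InjOn v s) {i : ι} (hi : i ∈ s) :
    (hermiteFejerBasis s v i).degree < (2 * #s : ℕ) := by
  have hlin : ∀ a : F, (1 - (X - C (v i)) * C a : F[X]).degree ≤ (1 : ℕ) := fun a =>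
    degree_le_of_natDegree_le (by compute_degree)
  have hsq : (Lagrange.basis s v i ^ 2).degree = (2 * (#s - 1) : ℕ) := by
    simp [degree_pow, Lagrange.degree_basis hv hi, two_mul]
  rw [hermiteFejerBasis]
  refine (degree_mul_le _ _).trans_lt ((add_le_add (hlin _) hsq.le).trans_lt ?_)
  have hcard := card_pos.mpr ⟨i, hi⟩
  exact_mod_cast (by omega : 1 + 2 * (#s - 1) < 2 * #s)

theorem eval_hermiteFejerBasis_node (hv : Set.InjOn v s) {i j : ι} (hi : i ∈ s) (hj : j ∈ s) :
    (hermiteFejerBasis s v i).eval (v j) = if i = j then 1 else 0 := by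
  split_ifs with hij
  · subst hij
    simp [hermiteFejerBasis, Lagrange.eval_basis_self hv hi]
  · simp [hermiteFejerBasis, Lagrange.eval_basis_of_ne hij hj]

theorem eval_derivative_hermiteFejerBasis_node (hv : Set.InjOn v s) {i j : ι} (hi : i ∈ s)
    (hj : j ∈ s) : (hermiteFejerBasis s v i).derivative.eval (v j) = 0 := by
  by_cases hij : i = j
  · subst hij
    simp [hermiteFejerBasis, derivative_mul, derivative_pow, Lagrange.eval_basis_self hv hi,
      two_mul_eval_derivative_basis_self hi]
  · simp [hermiteFejerBasis, derivative_mul, derivative_pow, Lagrange.eval_basis_of_ne hij hj]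

theorem sum_hermiteFejerBasis (hv : Set.InjOn v s) (hs : s.Nonempty) :
    ∑ i ∈ s, hermiteFejerBasis s v i = 1 := by
  rw [← sub_eq_zero]
  refine eq_zero_of_double_roots hv ?_ (fun j hj => ?_) fun j hj => ?_
  · rw [← mem_degreeLT]
    refine Submodule.sub_mem _ (Submodule.sum_mem _ fun i hi =>
      mem_degreeLT.mpr (degree_hermiteFejerBasis_lt hv hi)) (mem_degreeLT.mpr ?_)
    rw [degree_one]
    exact_mod_cast Nat.mul_pos two_pos hs.card_pos
  · rw [eval_sub, eval_finsetSum, eval_one,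
      sum_congr rfl fun i hi => eval_hermiteFejerBasis_node hv hi hj, sum_ite_eq', if_pos hj,
      sub_self]
  · rw [derivative_sub, derivative_sum, eval_sub, eval_finsetSum, derivative_one, eval_zero,
      sum_eq_zero fun i hi => eval_derivative_hermiteFejerBasis_node hv hi hj, sub_zero]

end Fejer

section PeanoKernel

variable {ι : Type*} [DecidableEq ι] {s : Finset ι} {v : ι → ℝ} {a b t M : ℝ} {h : ℝ → ℝ}

/-- The Peano kernels of Lagrange interpolation at the nodes `v i`, `i ∈ s`, for the point `t`:
when `m < #s`, the integral over `[a, b]` of the `m`-th kernel against the derivative of order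
`m + 1` is the interpolation error at `t`. -/
noncomputable def peanoKernel (b : ℝ) (s : Finset ι) (v : ι → ℝ) (t : ℝ) : ℕ → ℝ → ℝ
  | 0 => fun y => (Lagrange.interpolate s v fun i => if v i < y then 1 else 0).eval t -
      if t < y then 1 else 0
  | m + 1 => tailIntegral b (peanoKernel b s v t m)

theorem peanoKernel_zero_mul (h : ℝ → ℝ) (y : ℝ) :
    peanoKernel b s v t 0 y * h y =
      ∑ i ∈ s, (Lagrange.basis s v i).eval t * ((if v i < y then 1 else 0) * h y) -
        (if t < y then 1 else 0) * h y := by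
  simp only [peanoKernel, Lagrange.interpolate_apply, eval_finsetSum, eval_mul, eval_C, sub_mul,
    sum_mul]
  congr 1
  exact sum_congr rfl fun i _ => by ring

theorem intervalIntegrable_sum_basis_mul (hh : IntervalIntegrable h volume a b) :
    IntervalIntegrable (fun y => ∑ i ∈ s, (Lagrange.basis s v i).eval t *
      ((if v i < y then 1 else 0) * h y)) volume a b := by
  simpa only [sum_fn] using IntervalIntegrable.sum s
    fun i _ => (intervalIntegrable_ite_lt_mul hh (v i)).const_mul _

theorem intervalIntegrable_peanoKernel (m : ℕ) :
    IntervalIntegrable (peanoKernel b s v t m) volume a b := by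
  induction m with
  | zero =>
    have hone : IntervalIntegrable (fun _ => (1 : ℝ)) volume a b := intervalIntegrable_const
    have hmul := (intervalIntegrable_sum_basis_mul (s := s) (v := v) (t := t) hone).sub
      (intervalIntegrable_ite_lt_mul hone t)
    refine hmul.congr fun y _ => ?_
    simpa only [mul_one] using (peanoKernel_zero_mul (fun _ => 1) y).symm
  | succ m ih =>
    exact (absolutelyContinuousOnInterval_tailIntegral ih).continuousOn.intervalIntegrable

theorem integral_peanoKernel_zero_mul (hs : s.Nonempty) (hv : Set.InjOn v s)
    (hmem : ∀ i ∈ s, v i ∈ Set.Icc a b) (ht : t ∈ Set.Icc a b) {H : ℝ → ℝ}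
    (hh : IntervalIntegrable h volume a b)
    (hH : ∀ y ∈ Set.Icc a b, H y = H a + ∫ z in a..y, h z) :
    ∫ y in a..b, peanoKernel b s v t 0 y * h y =
      H t - (Lagrange.interpolate s v fun i => H (v i)).eval t := by
  have htail : ∀ z ∈ Set.Icc a b, tailIntegral b h z = H b - H z := by
    intro z hz
    have hab : a ≤ b := hz.1.trans hz.2
    have hsub := tailIntegral_sub_tailIntegral hh Set.left_mem_uIcc (Set.Icc_subset_uIcc hz)
    have hall : tailIntegral b h a = ∫ y in a..b, h y := rfl
    linarith [hH b (Set.right_mem_Icc.mpr hab), hH z hz]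
  have hone : ∑ i ∈ s, (Lagrange.basis s v i).eval t = 1 := by
    rw [← eval_finsetSum, Lagrange.sum_basis hv hs, eval_one]
  simp_rw [peanoKernel_zero_mul]
  rw [intervalIntegral.integral_sub (intervalIntegrable_sum_basis_mul hh)
      (intervalIntegrable_ite_lt_mul hh t), integral_ite_lt_mul ht,
    intervalIntegral.integral_finsetSum
      fun i _ => (intervalIntegrable_ite_lt_mul hh (v i)).const_mul _]
  simp_rw [intervalIntegral.integral_const_mul]
  rw [sum_congr rfl fun i hi => by rw [integral_ite_lt_mul (hmem i hi), htail _ (hmem i hi)],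
    htail t ht, Lagrange.interpolate_apply, eval_finsetSum]
  simp only [mul_sub, sum_sub_distrib, ← sum_mul, hone, eval_mul, eval_C, one_mul]
  rw [sum_congr rfl fun i _ => mul_comm _ (H (v i))]
  ring

theorem orthogonalToDegreeLT_peanoKernel (hv : Set.InjOn v s)
    (hmem : ∀ i ∈ s, v i ∈ Set.Icc a b) (ht : t ∈ Set.Icc a b) {m : ℕ} (hm : m < #s) :
    OrthogonalToDegreeLT a b (#s - 1 - m) (peanoKernel b s v t m) := by
  induction m with
  | zero =>
    intro q hq
    obtain ⟨Q, rfl, hQ⟩ := exists_derivative_eq_of_degree_lt hq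
    rw [Nat.sub_zero, Nat.sub_add_cancel hm] at hQ
    rw [integral_peanoKernel_zero_mul (card_pos.mp hm) hv hmem ht
      ((derivative Q).continuous.intervalIntegrable a b)
      fun y _ => eval_eq_add_integral_derivative Q a y, ← Lagrange.eq_interpolate hv hQ, sub_self]
  | succ m ih =>
    have horth := ih (by omega)
    rw [show #s - 1 - m = #s - 1 - (m + 1) + 1 by omega] at horth
    exact horth.tailIntegral (intervalIntegrable_peanoKernel m)

theorem sub_interpolate_eq_integral_peanoKernel_mul (hv : Set.InjOn v s)
    (hmem : ∀ i ∈ s, v i ∈ Set.Icc a b) (ht : t ∈ Set.Icc a b) {D : ℕ → ℝ → ℝ} {m : ℕ}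
    (hm : m < #s) (hint : ∀ k ≤ m, IntervalIntegrable (D (k + 1)) volume a b)
    (hD : ∀ k ≤ m, ∀ y ∈ Set.Icc a b, D k y = D k a + ∫ z in a..y, D (k + 1) z) :
    D 0 t - (Lagrange.interpolate s v fun i => D 0 (v i)).eval t =
      ∫ y in a..b, peanoKernel b s v t m y * D (m + 1) y := by
  induction m with
  | zero =>
    exact (integral_peanoKernel_zero_mul (card_pos.mp hm) hv hmem ht (hint 0 le_rfl)
      (hD 0 le_rfl)).symm
  | succ m ih =>
    have hm' : m < #s := by omega
    have hD' := hD (m + 1) le_rfl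
    rw [← Set.uIcc_of_le (ht.1.trans ht.2)] at hD'
    rw [ih hm' (fun k hk => hint k (by omega)) (fun k hk => hD k (by omega)),
      integral_mul_eq_integral_tailIntegral_mul (intervalIntegrable_peanoKernel m)
        (hint (m + 1) le_rfl) hD',
      (orthogonalToDegreeLT_peanoKernel hv hmem ht hm').integral_eq_zero (by omega), zero_mul,
      zero_add, peanoKernel]

theorem abs_peanoKernel_zero_le (hs : s.Nonempty) (hv : Set.InjOn v s)
    (hM : ∀ i ∈ s, |(Lagrange.basis s v i).eval t| ≤ M) (y : ℝ) :
    |peanoKernel b s v t 0 y| ≤ M := by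
  simp only [peanoKernel]
  rcases le_or_gt y t with hyt | hty
  · obtain ⟨i, hi, hle⟩ := exists_abs_sum_basis_le (t := t) hs hv (fun i => v i < y) (-1)
      (by norm_num) (fun i _ j _ hi hj => by linarith) fun i _ hi => by linarith
    rw [if_neg hyt.not_gt, sub_zero, eval_interpolate_ite]
    exact hle.trans (hM i hi)
  · obtain ⟨i, hi, hle⟩ := exists_abs_sum_basis_le (t := t) hs hv (fun i => ¬ v i < y) 1
      one_ne_zero (fun i _ j _ hi hj => by linarith [not_not.mp hj]) fun i _ hi => by linarith
    have hone : (∑ i ∈ s with v i < y, (Lagrange.basis s v i).eval t) +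
        ∑ i ∈ s with ¬ v i < y, (Lagrange.basis s v i).eval t = 1 := by
      rw [sum_filter_add_sum_filter_not, ← eval_finsetSum, Lagrange.sum_basis hv hs, eval_one]
    rw [if_pos hty, eval_interpolate_ite, ← hone, sub_add_cancel_left, abs_neg]
    exact hle.trans (hM i hi)

theorem abs_peanoKernel_le (hv : Set.InjOn v s) (hmem : ∀ i ∈ s, v i ∈ Set.Icc (-1) 1)
    (ht : t ∈ Set.Icc (-1) 1) (hM : ∀ i ∈ s, |(Lagrange.basis s v i).eval t| ≤ M) {m : ℕ}
    (hm : m < #s) {y : ℝ} (hy : y ∈ Set.Icc (-1) 1) :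
    |peanoKernel 1 s v t m y| ≤ M * (Real.pi ^ m / (#s + 1).descFactorial m) := by
  induction m generalizing y with
  | zero => simpa using abs_peanoKernel_zero_le (card_pos.mp hm) hv hM y
  | succ m ih =>
    have hm' : m < #s := by omega
    have hbound := abs_tailIntegral_le_of_orthogonalToDegreeLT (by omega : 0 < #s - 1 - m)
      (intervalIntegrable_peanoKernel m) (fun z hz => ih hm' hz)
      (orthogonalToDegreeLT_peanoKernel hv hmem ht hm') hy
    rw [show #s - 1 - m + 2 = #s + 1 - m by omega, mul_assoc, div_mul_div_comm, ← pow_succ,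
      ← Nat.cast_mul, mul_comm (Nat.descFactorial _ _), ← Nat.descFactorial_succ] at hbound
    exact hbound

end PeanoKernel

theorem intervalIntegrable_of_boundedVariationOn {g : ℝ → ℝ} {a b : ℝ} (hab : a ≤ b)
    (hg : BoundedVariationOn g (Set.Icc a b)) : IntervalIntegrable g volume a b := by
  obtain ⟨p, q, hp, hq, hgpq, -⟩ := exists_monotone_sub_monotone_eqOn hab hg
  refine (hp.intervalIntegrable.sub hq.intervalIntegrable).congr fun y hy => ?_
  exact (hgpq (Set.uIcc_of_le hab ▸ Set.uIoc_subset_uIcc hy)).symm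

theorem iteratedDeriv_eq_add_integral {f : ℝ → ℝ} {m k : ℕ} (hf : ContDiff ℝ m f) (hk : k < m)
    (a y : ℝ) :
    iteratedDeriv k f y = iteratedDeriv k f a + ∫ z in a..y, iteratedDeriv (k + 1) f z := by
  have hderiv : ∀ z, HasDerivAt (iteratedDeriv k f) (iteratedDeriv (k + 1) f z) z := fun z => by
    rw [iteratedDeriv_succ]
    exact (hf.differentiable_iteratedDeriv k (by exact_mod_cast hk) z).hasDerivAt
  rw [intervalIntegral.integral_eq_sub_of_hasDerivAt (fun z _ => hderiv z)
    ((hf.continuous_iteratedDeriv (k + 1) (by exact_mod_cast hk)).intervalIntegrable _ _),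
    add_sub_cancel]

theorem sub_interpolate_eq_integral_peanoKernel_mul_of_contDiff {ι : Type*} [DecidableEq ι]
    {s : Finset ι} {v : ι → ℝ} {a b t : ℝ} (hv : Set.InjOn v s)
    (hmem : ∀ i ∈ s, v i ∈ Set.Icc a b) (ht : t ∈ Set.Icc a b) {m : ℕ} (hm : m < #s)
    {f g : ℝ → ℝ} (hf : ContDiff ℝ m f) (hg : IntervalIntegrable g volume a b)
    (hrep : ∀ y ∈ Set.Icc a b, iteratedDeriv m f y = iteratedDeriv m f a + ∫ z in a..y, g z) :
    f t - (Lagrange.interpolate s v fun i => f (v i)).eval t =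
      ∫ y in a..b, peanoKernel b s v t m y * g y := by
  have herr := sub_interpolate_eq_integral_peanoKernel_mul hv hmem ht
    (D := fun k => if k ≤ m then iteratedDeriv k f else g) hm ?_ ?_
  · simpa using herr
  · intro k hk
    rcases hk.lt_or_eq with hlt | rfl
    · simp only [if_pos (Nat.succ_le_of_lt hlt)]
      exact (hf.continuous_iteratedDeriv (k + 1) (by exact_mod_cast hlt)).intervalIntegrable _ _
    · simpa using hg
  · intro k hk y hy
    rcases hk.lt_or_eq with hlt | rfl
    · simp only [if_pos hk, if_pos (Nat.succ_le_of_lt hlt)]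
      exact iteratedDeriv_eq_add_integral hf hlt a y
    · simpa using hrep y hy

theorem abs_sub_interpolate_le {ι : Type*} [DecidableEq ι] {s : Finset ι} {v : ι → ℝ} {t M : ℝ}
    (hv : Set.InjOn v s) (hmem : ∀ i ∈ s, v i ∈ Set.Icc (-1) 1) (ht : t ∈ Set.Icc (-1) 1)
    (hM : ∀ i ∈ s, |(Lagrange.basis s v i).eval t| ≤ M) {m : ℕ} (hm : m + 1 < #s)
    {f g : ℝ → ℝ} (hf : ContDiff ℝ m f) (hg : BoundedVariationOn g (Set.Icc (-1) 1))
    (hrep : ∀ y ∈ Set.Icc (-1) 1,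
      iteratedDeriv m f y = iteratedDeriv m f (-1) + ∫ z in (-1)..y, g z) :
    |f t - (Lagrange.interpolate s v fun i => f (v i)).eval t| ≤
      M * (Real.pi ^ (m + 1) / (#s + 1).descFactorial (m + 1)) *
        (eVariationOn g (Set.Icc (-1) 1)).toReal := by
  have hab : (-1 : ℝ) ≤ 1 := by norm_num
  have hm' : m < #s := by omega
  rw [sub_interpolate_eq_integral_peanoKernel_mul_of_contDiff hv hmem ht hm' hf
    (intervalIntegrable_of_boundedVariationOn hab hg) hrep]
  exact abs_integral_mul_le_eVariationOn hab (intervalIntegrable_peanoKernel m)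
    ((orthogonalToDegreeLT_peanoKernel hv hmem ht hm').integral_eq_zero (by omega))
    (fun u hu => abs_peanoKernel_le hv hmem ht hM hm hu) hg

section FinNodes

variable {n : ℕ} {x : Fin n → ℝ}

theorem eval_lagrange_basis_eq_lagBasis (x : Fin n → ℝ) (k : Fin n) (t : ℝ) :
    (Lagrange.basis univ x k).eval t = lagBasis x k t := by
  rw [Lagrange.basis, eval_prod, lagBasis]
  exact prod_congr rfl fun j _ => eval_basisDivisor _ _ t

theorem eval_lagrange_interpolate_eq_lagInterp (x : Fin n → ℝ) (f : ℝ → ℝ) (t : ℝ) :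
    (Lagrange.interpolate univ x fun k => f (x k)).eval t = lagInterp x f t := by
  simp [Lagrange.interpolate_apply, eval_finsetSum, lagInterp, eval_lagrange_basis_eq_lagBasis]

theorem eval_hermiteFejerBasis_eq_fejerV_mul (x : Fin n → ℝ) (k : Fin n) (t : ℝ) :
    (hermiteFejerBasis univ x k).eval t = fejerV x k t * lagBasis x k t ^ 2 := by
  simp [hermiteFejerBasis, fejerV, omegaPoly, Lagrange.nodal, eval_lagrange_basis_eq_lagBasis]

theorem sum_fejerV_mul_lagBasis_sq [NeZero n] (hx : Function.Injective x) (t : ℝ) :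
    ∑ k, fejerV x k t * lagBasis x k t ^ 2 = 1 := by
  simp_rw [← eval_hermiteFejerBasis_eq_fejerV_mul]
  rw [← eval_finsetSum, sum_hermiteFejerBasis hx.injOn univ_nonempty, eval_one]

theorem abs_lagBasis_le_of_le_fejerV (hx : Function.Injective x) {c t : ℝ} (hc : 0 < c)
    (hsn : ∀ k, c ≤ fejerV x k t) (k : Fin n) : |lagBasis x k t| ≤ 1 / √c := by
  have : NeZero n := ⟨k.pos.ne'⟩
  have hsq : c * lagBasis x k t ^ 2 ≤ 1 := calc
    c * lagBasis x k t ^ 2 ≤ fejerV x k t * lagBasis x k t ^ 2 :=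
      mul_le_mul_of_nonneg_right (hsn k) (sq_nonneg _)
    _ ≤ ∑ k, fejerV x k t * lagBasis x k t ^ 2 :=
      single_le_sum (f := fun k => fejerV x k t * lagBasis x k t ^ 2)
        (fun i _ => mul_nonneg (hc.le.trans (hsn i)) (sq_nonneg _)) (mem_univ k)
    _ = 1 := sum_fejerV_mul_lagBasis_sq hx t
  rw [← Real.sqrt_one, ← Real.sqrt_div zero_le_one]
  exact Real.abs_le_sqrt ((le_div_iff₀' hc).mpr hsq)

end FinNodes

theorem natCast_add_one_sub_one_withTop (m : ℕ) : ((m + 1 : ℕ) : WithTop ℕ∞) - 1 = m := by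
  change (((m + 1 : ℕ) : ℕ∞) : WithTop ℕ∞) - ((1 : ℕ∞) : WithTop ℕ∞) = ((m : ℕ∞) : WithTop ℕ∞)
  rw [← WithTop.coe_sub]
  norm_cast

theorem stmt19_general {n r : ℕ} (hr : 1 ≤ r) (hn : r + 1 ≤ n) {x : Fin n → ℝ}
    (hx : Function.Injective x) (hmem : ∀ i, x i ∈ Set.Icc (-1) 1) {t : ℝ}
    (ht : t ∈ Set.Icc (-1) 1) {c : ℝ} (hc : 0 < c) (hsn : ∀ k, c ≤ fejerV x k t) {f g : ℝ → ℝ}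
    (hf : ContDiff ℝ (r - 1) f) (hBV : BoundedVariationOn g (Set.Icc (-1) 1))
    (hrep : ∀ y ∈ Set.Icc (-1) 1,
      iteratedDeriv (r - 1) f y = iteratedDeriv (r - 1) f (-1) + ∫ z in (-1)..y, g z) :
    |f t - lagInterp x f t| ≤ Real.pi ^ r * (eVariationOn g (Set.Icc (-1) 1)).toReal /
      (√c * (n + 1).descFactorial r) := by
  obtain ⟨m, rfl⟩ : ∃ m, r = m + 1 := ⟨r - 1, by omega⟩
  rw [natCast_add_one_sub_one_withTop] at hf
  have hM : ∀ k ∈ univ, |(Lagrange.basis univ x k).eval t| ≤ 1 / √c := fun k _ => by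
    rw [eval_lagrange_basis_eq_lagBasis]
    exact abs_lagBasis_le_of_le_fejerV hx hc hsn k
  have herr := abs_sub_interpolate_le hx.injOn (fun i _ => hmem i) ht hM (by simpa using hn)
    hf hBV hrep
  rw [eval_lagrange_interpolate_eq_lagInterp, card_univ, Fintype.card_fin] at herr
  exact herr.trans_eq (by ring)

theorem stmt19 {n r : ℕ} (hr : 1 ≤ r) (hn : r + 1 ≤ n)
    (x : Fin n → ℝ)
    (hdec : ∀ i j : Fin n, i < j → x j < x i)
    (hmem : ∀ i, x i ∈ Set.Icc (-1 : ℝ) 1)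
    (c : ℝ) (hc : 0 < c)
    (hsn : ∀ k : Fin n, ∀ t ∈ Set.Icc (-1 : ℝ) 1, c ≤ fejerV x k t)
    (f g : ℝ → ℝ) (V : ℝ)
    (hf : ContDiff ℝ (r - 1) f)
    (hg : IntegrableOn g (Set.Icc (-1 : ℝ) 1))
    (hBV : BoundedVariationOn g (Set.Icc (-1 : ℝ) 1))
    (hV : (eVariationOn g (Set.Icc (-1 : ℝ) 1)).toReal = V)
    (hrep : ∀ t ∈ Set.Icc (-1 : ℝ) 1,
      iteratedDeriv (r - 1) f t = iteratedDeriv (r - 1) f (-1) + ∫ y in (-1 : ℝ)..t, g y) :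
    ∀ t ∈ Set.Icc (-1 : ℝ) 1,
      |f t - lagInterp x f t| ≤
        Real.pi ^ r * V /
          (Real.sqrt c * ∏ i ∈ Finset.range r, ((n : ℝ) - 1 - i)) := by
  intro t ht
  have hx : StrictAnti x := hdec
  have hpos : 0 < (n - 1).descFactorial r := Nat.pos_of_ne_zero fun h => by
    rw [Nat.descFactorial_eq_zero_iff_lt] at h
    omega
  have hle : (n - 1).descFactorial r ≤ (n + 1).descFactorial r := Nat.descFactorial_le r (by omega)
  rw [← descPochhammer_eval_eq_prod_range, ← Nat.cast_pred (by omega),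
    descPochhammer_eval_eq_descFactorial, ← hV]
  refine (stmt19_general hr hn hx.injective hmem ht hc (hsn · t ht) hf hBV hrep).trans ?_
  gcongr
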